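/- arXiv:0707.0568 — 2 statements merged into one kernel-verified Lean document; each statement's English description precedes it below -/
import Mathlib

section
/- With the high-SINR rates R_q and strategy sets P_q°, for every vector λ = (λ_1,…,λ_Q) of positive weights, the modified game G̃(λ) with payoffs Φ̃_q(p) = R_q(p) + (1/λ_q)·Σ_{r≠q} λ_r·R_r(p) admits exactly one Nash equilibrium, and this equilibrium is the (unique) global maximizer of p ↦ Σ_{q=1}^Q λ_q·R_q(p) over P_1°×…×P_Q°. (Proposition 4, second part: under the low-interference/high-SNR rate model, the modified game has a unique Nash equilibrium, which is Pareto optimal.) -/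
/-!
Multiplying the payoff of user `q` by `λ_q` gives the weighted sum rate `U = Σ_q λ_q R_q`
(`lam_mul_modPayoff`), so Nash equilibria are exactly the feasible profiles at which `U` cannot be
improved by changing one user's strategy. In the coordinates `x = log p` the function `U` is
smooth and concave, being affine minus a sum of log-sum-exp functions, and the feasible sets stay
convex; hence blockwise maximality implies global maximality (`le_of_block_max`, `isModNE_max`).
Global maximizers are Nash equilibria because `U` is a potential.

A maximizer exists because `exp (N U)` extends continuously to the compact set of nonnegative
feasible profiles and vanishes as soon as some power does (`exists_max`). It is unique because
two distinct profiles have a mean, geometric or (for a single user) arithmetic, at which `U`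
exceeds the average of its values (`exists_better_mean`).
-/

open scoped ENNReal

namespace HighSinr

/-- Strategy set `P_q°` with strictly positive powers, spectral-mask limits in `(0,∞]`,
and average power at most `1`. -/
def stratSet (N : ℕ) (pmax : Fin N → ℝ≥0∞) : Set (Fin N → ℝ) :=
  { p | (∀ k, 0 < p k ∧ ENNReal.ofReal (p k) ≤ pmax k) ∧
        (1 / (N : ℝ)) * ∑ k, p k ≤ 1 }

variable {Q N : ℕ}

/-- High-SINR (low-interference) rate of user `q`:
`R_q(p) = (1/N) Σ_k log(G_qq(k) p_q(k) / (1 + Σ_{r≠q} G_rq(k) p_r(k)))`. -/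
noncomputable def rate (Gc : Fin Q → Fin Q → Fin N → ℝ) (q : Fin Q)
    (p : Fin Q → Fin N → ℝ) : ℝ :=
  (1 / (N : ℝ)) * ∑ k, Real.log (Gc q q k * p q k /
    (1 + ∑ r ∈ Finset.univ.erase q, Gc r q k * p r k))

end HighSinr

namespace HighSinr

variable {Q N : ℕ}

/-- Payoff `Φ̃_q` of user `q` in the modified game `G̃(λ)` built on the high-SINR rates. -/
noncomputable def modPayoff (Gc : Fin Q → Fin Q → Fin N → ℝ) (lam : Fin Q → ℝ)
    (q : Fin Q) (p : Fin Q → Fin N → ℝ) : ℝ :=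
  rate Gc q p + (1 / lam q) * ∑ r ∈ Finset.univ.erase q, lam r * rate Gc r p

/-- `p` is a Nash equilibrium of the modified game `G̃(λ)` (high-SINR rates). -/
def isModNE (Gc : Fin Q → Fin Q → Fin N → ℝ) (pmax : Fin Q → Fin N → ℝ≥0∞)
    (lam : Fin Q → ℝ) (p : Fin Q → Fin N → ℝ) : Prop :=
  (∀ q, p q ∈ stratSet N (pmax q)) ∧
  ∀ q, ∀ pq ∈ stratSet N (pmax q),
    modPayoff Gc lam q (Function.update p q pq) ≤ modPayoff Gc lam q p

end HighSinr

namespace HighSinr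

/-! ### Convexity inequalities -/

/-- Convexity of the log-sum-exp function with an additional constant term `1`. With `c` the
right-hand side, each exponential divided by `exp c` is bounded by convexity of `exp`, and the
bounds add up to `1`. -/
theorem log_one_add_sum_exp_le {ι : Type*} (s : Finset ι) (a x y : ι → ℝ) (ha : ∀ i, 0 < a i)
    {α β : ℝ} (hα : 0 ≤ α) (hβ : 0 ≤ β) (hαβ : α + β = 1) :
    Real.log (1 + ∑ i ∈ s, a i * Real.exp (α * x i + β * y i)) ≤
      α * Real.log (1 + ∑ i ∈ s, a i * Real.exp (x i)) +
      β * Real.log (1 + ∑ i ∈ s, a i * Real.exp (y i)) := by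
  have hpos : ∀ z : ι → ℝ, 0 < 1 + ∑ i ∈ s, a i * Real.exp (z i) := fun z => by
    have : 0 ≤ ∑ i ∈ s, a i * Real.exp (z i) :=
      Finset.sum_nonneg fun i _ => mul_nonneg (ha i).le (Real.exp_pos _).le
    linarith
  have hA := hpos x
  have hB := hpos y
  rw [Real.log_le_iff_le_exp (hpos fun i => α * x i + β * y i)]
  set A := 1 + ∑ i ∈ s, a i * Real.exp (x i) with hAdef
  set B := 1 + ∑ i ∈ s, a i * Real.exp (y i) with hBdef
  set c := α * Real.log A + β * Real.log B with hc
  have key : ∀ u v : ℝ, Real.exp (α * u + β * v) ≤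
      Real.exp c * (α * (Real.exp u / A) + β * (Real.exp v / B)) := by
    intro u v
    have h := convexOn_exp.2 (Set.mem_univ (u - Real.log A)) (Set.mem_univ (v - Real.log B))
      hα hβ hαβ
    simp only [smul_eq_mul, Real.exp_sub, Real.exp_log hA, Real.exp_log hB] at h
    have e : α * u + β * v = c + (α * (u - Real.log A) + β * (v - Real.log B)) := by
      rw [hc]; ring
    rw [e, Real.exp_add]
    exact mul_le_mul_of_nonneg_left h (Real.exp_pos _).le
  have h0 := key 0 0
  simp only [mul_zero, add_zero, Real.exp_zero] at h0
  calc 1 + ∑ i ∈ s, a i * Real.exp (α * x i + β * y i)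
      ≤ Real.exp c * (α * (1 / A) + β * (1 / B)) + ∑ i ∈ s, a i *
        (Real.exp c * (α * (Real.exp (x i) / A) + β * (Real.exp (y i) / B))) :=
        add_le_add h0 (Finset.sum_le_sum fun i _ => mul_le_mul_of_nonneg_left (key _ _) (ha i).le)
    _ = Real.exp c * (α * (A / A) + β * (B / B)) := by
        have e : ∑ i ∈ s, a i *
            (Real.exp c * (α * (Real.exp (x i) / A) + β * (Real.exp (y i) / B))) =
            Real.exp c * (α / A) * ∑ i ∈ s, a i * Real.exp (x i) +
            Real.exp c * (β / B) * ∑ i ∈ s, a i * Real.exp (y i) := by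
          rw [Finset.mul_sum, Finset.mul_sum, ← Finset.sum_add_distrib]
          exact Finset.sum_congr rfl fun i _ => by ring
        rw [e, show ∑ i ∈ s, a i * Real.exp (x i) = A - 1 by rw [hAdef]; ring,
          show ∑ i ∈ s, a i * Real.exp (y i) = B - 1 by rw [hBdef]; ring]
        ring
    _ = Real.exp c := by rw [div_self hA.ne', div_self hB.ne', mul_one, mul_one, hαβ, mul_one]

/-- Strict midpoint log-convexity of the interference along geometric means: Cauchy–Schwarz
handles the quadratic term, and the linear term is strict by AM–GM. -/
theorem one_add_sum_sqrt_sq_lt {ι : Type*} (s : Finset ι) (a p p' : ι → ℝ) (ha : ∀ i, 0 < a i)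
    (hp : ∀ i, 0 < p i) (hp' : ∀ i, 0 < p' i) (hne : ∃ i ∈ s, p i ≠ p' i) :
    (1 + ∑ i ∈ s, a i * Real.sqrt (p i * p' i)) ^ 2 <
      (1 + ∑ i ∈ s, a i * p i) * (1 + ∑ i ∈ s, a i * p' i) := by
  have h1 : (∑ i ∈ s, a i * Real.sqrt (p i * p' i)) ^ 2 ≤
      (∑ i ∈ s, a i * p i) * (∑ i ∈ s, a i * p' i) := by
    refine Finset.sum_sq_le_sum_mul_sum_of_sq_le_mul s (fun i _ => (mul_pos (ha i) (hp i)).le)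
      (fun i _ => (mul_pos (ha i) (hp' i)).le) fun i _ => ?_
    refine le_of_eq ?_
    rw [mul_pow, Real.sq_sqrt (mul_pos (hp i) (hp' i)).le]; ring
  have hle : ∀ i, 0 ≤ p i + p' i - 2 * Real.sqrt (p i * p' i) ∧
      (p i ≠ p' i → 0 < p i + p' i - 2 * Real.sqrt (p i * p' i)) := by
    intro i
    have e : p i + p' i - 2 * Real.sqrt (p i * p' i) =
        (Real.sqrt (p i) - Real.sqrt (p' i)) ^ 2 := by
      rw [sub_sq, Real.sq_sqrt (hp i).le, Real.sq_sqrt (hp' i).le, Real.sqrt_mul (hp i).le]; ring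
    rw [e]
    refine ⟨sq_nonneg _, fun h => sq_pos_of_ne_zero (sub_ne_zero.2 fun h' => h ?_)⟩
    exact (Real.sqrt_inj (hp i).le (hp' i).le).1 h'
  have h2 : 2 * ∑ i ∈ s, a i * Real.sqrt (p i * p' i) <
      ∑ i ∈ s, a i * p i + ∑ i ∈ s, a i * p' i := by
    rw [Finset.mul_sum, ← Finset.sum_add_distrib]
    obtain ⟨j, hj, hjne⟩ := hne
    refine Finset.sum_lt_sum (fun i _ => ?_) ⟨j, hj, ?_⟩
    · nlinarith [mul_nonneg (ha i).le (hle i).1]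
    · nlinarith [mul_pos (ha j) ((hle j).2 hjne)]
  nlinarith

/-! ### Blockwise maxima of concave functions -/

/-- A differentiable concave function that cannot be improved by changing a single block, over a
product of convex sets, is globally maximal: the derivative towards any feasible point is the sum
of the derivatives along the blocks, each of which is nonpositive. -/
theorem le_of_block_max {ι : Type*} [Fintype ι] [DecidableEq ι] {E : Type*}
    [NormedAddCommGroup E] [NormedSpace ℝ E] (W : (ι → E) → ℝ) (S : ι → Set E)
    (hS : ∀ i, Convex ℝ (S i)) (hW : ConcaveOn ℝ Set.univ W) (x : ι → E)
    (hx : ∀ i, x i ∈ S i) (hd : DifferentiableAt ℝ W x)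
    (hmax : ∀ i, ∀ z ∈ S i, W (Function.update x i z) ≤ W x)
    (y : ι → E) (hy : ∀ i, y i ∈ S i) : W y ≤ W x := by
  have hblock : ∀ i, fderiv ℝ W x (Pi.single i (y i - x i)) ≤ 0 := by
    intro i
    have hm : IsLocalMaxOn W (segment ℝ x (Function.update x i (y i))) x := by
      refine IsMaxOn.localize fun w hw => ?_
      rw [segment_eq_image'] at hw
      obtain ⟨t, ht, rfl⟩ := hw
      have e : x + t • (Function.update x i (y i) - x) =
          Function.update x i (x i + t • (y i - x i)) := by
        ext j
        by_cases h : j = i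
        · subst h; simp
        · simp [h]
      simp only [e]
      exact hmax i _ ((hS i).add_smul_sub_mem (hx i) (hy i) ht)
    have h := hm.hasFDerivWithinAt_nonpos hd.hasFDerivAt.hasFDerivWithinAt
      (sub_mem_posTangentConeAt_of_segment_subset subset_rfl)
    have e : Function.update x i (y i) - x = Pi.single i (y i - x i) := by
      ext j
      by_cases h : j = i
      · subst h; simp
      · simp [h]
    rwa [e] at h
  have hL : fderiv ℝ W x (y - x) ≤ 0 := by
    rw [← Finset.univ_sum_single (y - x), map_sum]
    exact Finset.sum_nonpos fun i _ => hblock i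
  have hc : ConcaveOn ℝ Set.univ (W ∘ AffineMap.lineMap (k := ℝ) x y) :=
    hW.comp_affineMap (AffineMap.lineMap x y)
  have hder : HasDerivAt (W ∘ AffineMap.lineMap (k := ℝ) x y) (fderiv ℝ W x (y - x)) 0 := by
    have h1 : HasFDerivAt W (fderiv ℝ W x) (AffineMap.lineMap (k := ℝ) x y 0) := by
      simpa using hd.hasFDerivAt
    exact h1.comp_hasDerivAt 0 AffineMap.hasDerivAt_lineMap
  have h := hc.slope_le_of_hasDerivAt (Set.mem_univ 0) (Set.mem_univ 1) one_pos hder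
  simp only [slope_def_field, Function.comp_apply, AffineMap.lineMap_apply_one,
    AffineMap.lineMap_apply_zero, sub_zero, div_one] at h
  linarith

/-! ### Convexity of the strategy sets -/

/-- A positive vector dominated by a convex combination of two strategies is a strategy. This
covers arithmetic means as well as geometric ones. -/
theorem mem_stratSet_of_le {N : ℕ} {pm : Fin N → ℝ≥0∞} {p p' m : Fin N → ℝ}
    (hp : p ∈ stratSet N pm) (hp' : p' ∈ stratSet N pm) {α β : ℝ} (hα : 0 ≤ α) (hβ : 0 ≤ β)
    (hαβ : α + β = 1) (hm : ∀ k, 0 < m k) (hle : ∀ k, m k ≤ α * p k + β * p' k) :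
    m ∈ stratSet N pm := by
  refine ⟨fun k => ⟨hm k, ?_⟩, ?_⟩
  · have : m k ≤ max (p k) (p' k) := by
      refine (hle k).trans ?_
      have e : max (p k) (p' k) = α * max (p k) (p' k) + β * max (p k) (p' k) := by
        rw [← add_mul, hαβ, one_mul]
      rw [e]
      exact add_le_add (mul_le_mul_of_nonneg_left (le_max_left _ _) hα)
        (mul_le_mul_of_nonneg_left (le_max_right _ _) hβ)
    rcases le_max_iff.1 this with h | h
    · exact (ENNReal.ofReal_le_ofReal h).trans (hp.1 k).2
    · exact (ENNReal.ofReal_le_ofReal h).trans (hp'.1 k).2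
  · have h1 : ∑ k, m k ≤ α * ∑ k, p k + β * ∑ k, p' k := by
      rw [Finset.mul_sum, Finset.mul_sum, ← Finset.sum_add_distrib]
      exact Finset.sum_le_sum fun k _ => hle k
    have hN : 0 ≤ 1 / (N : ℝ) := by positivity
    calc 1 / (N : ℝ) * ∑ k, m k ≤ 1 / (N : ℝ) * (α * ∑ k, p k + β * ∑ k, p' k) :=
          mul_le_mul_of_nonneg_left h1 hN
      _ = α * (1 / (N : ℝ) * ∑ k, p k) + β * (1 / (N : ℝ) * ∑ k, p' k) := by ring
      _ ≤ α * 1 + β * 1 := add_le_add (mul_le_mul_of_nonneg_left hp.2 hα)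
          (mul_le_mul_of_nonneg_left hp'.2 hβ)
      _ = 1 := by rw [mul_one, mul_one, hαβ]

theorem convex_log_stratSet {N : ℕ} (pm : Fin N → ℝ≥0∞) :
    Convex ℝ {x : Fin N → ℝ | (fun k => Real.exp (x k)) ∈ stratSet N pm} := by
  intro x hx y hy α β hα hβ hαβ
  refine mem_stratSet_of_le hx hy hα hβ hαβ (fun k => Real.exp_pos _) fun k => ?_
  simpa using convexOn_exp.2 (Set.mem_univ (x k)) (Set.mem_univ (y k)) hα hβ hαβ

variable {Q N : ℕ}

/-! ### The weighted sum rate in logarithmic coordinates -/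

theorem one_add_interference_pos {Gc : Fin Q → Fin Q → Fin N → ℝ} (hGc : ∀ r q k, 0 < Gc r q k)
    {p : Fin Q → Fin N → ℝ} (hp : ∀ q k, 0 ≤ p q k) (q : Fin Q) (k : Fin N) :
    0 < 1 + ∑ r ∈ Finset.univ.erase q, Gc r q k * p r k := by
  have : 0 ≤ ∑ r ∈ Finset.univ.erase q, Gc r q k * p r k :=
    Finset.sum_nonneg fun r _ => mul_nonneg (hGc r q k).le (hp r k)
  linarith

/-- The modified game is a weighted potential game, with the weighted sum rate as potential. -/
theorem lam_mul_modPayoff (Gc : Fin Q → Fin Q → Fin N → ℝ) {lam : Fin Q → ℝ}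
    (hlam : ∀ q, 0 < lam q) (q : Fin Q) (p : Fin Q → Fin N → ℝ) :
    lam q * modPayoff Gc lam q p = ∑ r, lam r * rate Gc r p := by
  rw [modPayoff, ← Finset.add_sum_erase _ _ (Finset.mem_univ q), mul_add, ← mul_assoc,
    mul_one_div_cancel (hlam q).ne', one_mul]

theorem rate_eq {Gc : Fin Q → Fin Q → Fin N → ℝ} (hGc : ∀ r q k, 0 < Gc r q k)
    {p : Fin Q → Fin N → ℝ} (hp : ∀ q k, 0 < p q k) (q : Fin Q) :
    rate Gc q p = (1 / (N : ℝ)) * ∑ k, (Real.log (Gc q q k) + Real.log (p q k) -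
      Real.log (1 + ∑ r ∈ Finset.univ.erase q, Gc r q k * p r k)) := by
  unfold rate
  congr 1
  refine Finset.sum_congr rfl fun k _ => ?_
  rw [Real.log_div (mul_pos (hGc q q k) (hp q k)).ne'
    (one_add_interference_pos hGc (fun q k => (hp q k).le) q k).ne',
    Real.log_mul (hGc q q k).ne' (hp q k).ne']

/-- The weighted sum rate as a function of the logarithms `x = log p` of the powers. -/
noncomputable def logObj (Gc : Fin Q → Fin Q → Fin N → ℝ) (lam : Fin Q → ℝ)
    (x : Fin Q → Fin N → ℝ) : ℝ :=
  ∑ q, lam q * ((1 / (N : ℝ)) * ∑ k, (Real.log (Gc q q k) + x q k -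
      Real.log (1 + ∑ r ∈ Finset.univ.erase q, Gc r q k * Real.exp (x r k))))

theorem sum_rate_exp {Gc : Fin Q → Fin Q → Fin N → ℝ} (hGc : ∀ r q k, 0 < Gc r q k)
    (lam : Fin Q → ℝ) (x : Fin Q → Fin N → ℝ) :
    ∑ q, lam q * rate Gc q (fun q k => Real.exp (x q k)) = logObj Gc lam x := by
  unfold logObj
  refine Finset.sum_congr rfl fun q _ => ?_
  rw [rate_eq hGc (fun _ _ => Real.exp_pos _)]
  simp only [Real.log_exp]

theorem logObj_concave {Gc : Fin Q → Fin Q → Fin N → ℝ} (hGc : ∀ r q k, 0 < Gc r q k)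
    {lam : Fin Q → ℝ} (hlam : ∀ q, 0 < lam q) : ConcaveOn ℝ Set.univ (logObj Gc lam) := by
  refine ⟨convex_univ, fun x _ y _ α β hα hβ hαβ => ?_⟩
  simp only [logObj, smul_eq_mul, Finset.mul_sum, ← Finset.sum_add_distrib, Pi.add_apply,
    Pi.smul_apply]
  refine Finset.sum_le_sum fun q _ => Finset.sum_le_sum fun k _ => ?_
  have h := log_one_add_sum_exp_le (Finset.univ.erase q) (fun r => Gc r q k)
    (fun r => x r k) (fun r => y r k) (fun r => hGc r q k) hα hβ hαβ
  have hw : 0 ≤ lam q * (1 / (N : ℝ)) := mul_nonneg (hlam q).le (by positivity)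
  have e : Real.log (Gc q q k) = α * Real.log (Gc q q k) + β * Real.log (Gc q q k) := by
    rw [← add_mul, hαβ, one_mul]
  have := mul_le_mul_of_nonneg_left h hw
  have e2 := congrArg (lam q * (1 / (N : ℝ)) * ·) e
  linarith

theorem logObj_differentiable {Gc : Fin Q → Fin Q → Fin N → ℝ} (hGc : ∀ r q k, 0 < Gc r q k)
    (lam : Fin Q → ℝ) : Differentiable ℝ (logObj Gc lam) := by
  unfold logObj
  refine Differentiable.fun_sum fun q _ =>
    ((Differentiable.fun_sum fun k _ => ?_).const_mul _).const_mul _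
  refine Differentiable.sub (by fun_prop) (Differentiable.log (by fun_prop) fun x => ?_)
  exact (one_add_interference_pos hGc (p := fun q k => Real.exp (x q k))
    (fun _ _ => (Real.exp_pos _).le) q k).ne'

/-- Every Nash equilibrium maximizes the weighted sum rate, by `le_of_block_max` in logarithmic
coordinates. -/
theorem isModNE_max {Gc : Fin Q → Fin Q → Fin N → ℝ} (hGc : ∀ r q k, 0 < Gc r q k)
    {pmax : Fin Q → Fin N → ℝ≥0∞} {lam : Fin Q → ℝ} (hlam : ∀ q, 0 < lam q)
    {p : Fin Q → Fin N → ℝ} (hp : isModNE Gc pmax lam p) {p' : Fin Q → Fin N → ℝ}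
    (hp' : ∀ q, p' q ∈ stratSet N (pmax q)) :
    ∑ q, lam q * rate Gc q p' ≤ ∑ q, lam q * rate Gc q p := by
  have hexp : ∀ u : Fin Q → Fin N → ℝ, (∀ q, u q ∈ stratSet N (pmax q)) →
      (fun q k => Real.exp (Real.log (u q k))) = u := fun u hu => by
    ext q k
    exact Real.exp_log ((hu q).1 k).1
  have ep := hexp p hp.1
  have ep' := hexp p' hp'
  have h := le_of_block_max (logObj Gc lam)
    (fun q => {x : Fin N → ℝ | (fun k => Real.exp (x k)) ∈ stratSet N (pmax q)})
    (fun q => convex_log_stratSet (pmax q)) (logObj_concave hGc hlam)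
    (fun q k => Real.log (p q k)) (fun q => by
      have := congrFun ep q
      simp only [Set.mem_ofPred_eq]
      rw [this]; exact hp.1 q) (logObj_differentiable hGc lam _)
    (fun q z hz => by
      rw [← sum_rate_exp hGc, ← sum_rate_exp hGc, ep, ← lam_mul_modPayoff Gc hlam q,
        ← lam_mul_modPayoff Gc hlam q]
      refine mul_le_mul_of_nonneg_left ?_ (hlam q).le
      have e : (fun r k => Real.exp
          (Function.update (fun q k => Real.log (p q k)) q z r k)) =
          Function.update p q fun k => Real.exp (z k) := by
        funext r k
        by_cases hr : r = q
        · subst hr; simp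
        · simp [hr, Real.exp_log ((hp.1 r).1 k).1]
      rw [e]
      exact hp.2 q _ hz)
    (fun q k => Real.log (p' q k)) (fun q => by
      have := congrFun ep' q
      simp only [Set.mem_ofPred_eq]
      rw [this]; exact hp' q)
  rwa [← sum_rate_exp hGc, ← sum_rate_exp hGc, ep, ep'] at h

/-! ### Uniqueness of the maximizer -/

/-- Two distinct profiles have a feasible mean whose weighted sum rate strictly exceeds the
average of theirs. With at least two users it is the geometric mean, strictness coming from the
interference; a single user sees no interference, and the arithmetic mean works since `log` is
strictly concave. -/
theorem exists_better_mean {Gc : Fin Q → Fin Q → Fin N → ℝ} (hGc : ∀ r q k, 0 < Gc r q k)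
    {pmax : Fin Q → Fin N → ℝ≥0∞} {lam : Fin Q → ℝ} (hlam : ∀ q, 0 < lam q)
    {p p' : Fin Q → Fin N → ℝ} (hp : ∀ q, p q ∈ stratSet N (pmax q))
    (hp' : ∀ q, p' q ∈ stratSet N (pmax q)) (hne : p ≠ p') :
    ∃ m : Fin Q → Fin N → ℝ, (∀ q, m q ∈ stratSet N (pmax q)) ∧
      ∑ q, lam q * rate Gc q p + ∑ q, lam q * rate Gc q p' < 2 * ∑ q, lam q * rate Gc q m := by
  have hp0 : ∀ q k, 0 < p q k := fun q k => ((hp q).1 k).1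
  have hp0' : ∀ q k, 0 < p' q k := fun q k => ((hp' q).1 k).1
  obtain ⟨q₀, k₀, hqk⟩ : ∃ q k, p q k ≠ p' q k := by
    by_contra! h
    exact hne (funext fun q => funext fun k => h q k)
  have hNpos : 0 < 1 / (N : ℝ) := by
    have : 0 < N := k₀.pos
    positivity
  -- All weights are positive, so a termwise comparison that is strict once suffices.
  have reduce : ∀ m : Fin Q → Fin N → ℝ, (∀ q k, 0 < m q k) →
      (∀ q k, Real.log (p q k) - Real.log (1 + ∑ r ∈ Finset.univ.erase q, Gc r q k * p r k) +
        (Real.log (p' q k) - Real.log (1 + ∑ r ∈ Finset.univ.erase q, Gc r q k * p' r k)) ≤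
        2 * (Real.log (m q k) - Real.log (1 + ∑ r ∈ Finset.univ.erase q, Gc r q k * m r k))) →
      (∃ q k, Real.log (p q k) - Real.log (1 + ∑ r ∈ Finset.univ.erase q, Gc r q k * p r k) +
        (Real.log (p' q k) - Real.log (1 + ∑ r ∈ Finset.univ.erase q, Gc r q k * p' r k)) <
        2 * (Real.log (m q k) - Real.log (1 + ∑ r ∈ Finset.univ.erase q, Gc r q k * m r k))) →
      ∑ q, lam q * rate Gc q p + ∑ q, lam q * rate Gc q p' < 2 * ∑ q, lam q * rate Gc q m := by
    intro m hm hle hlt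
    have hw : ∀ q, 0 < lam q * (1 / (N : ℝ)) := fun q => mul_pos (hlam q) hNpos
    simp only [rate_eq hGc hp0, rate_eq hGc hp0', rate_eq hGc hm, Finset.mul_sum,
      ← Finset.sum_add_distrib]
    obtain ⟨q₁, k₁, h₁⟩ := hlt
    refine Finset.sum_lt_sum (fun q _ => Finset.sum_le_sum fun k _ => ?_) ⟨q₁, Finset.mem_univ _,
      Finset.sum_lt_sum (fun k _ => ?_) ⟨k₁, Finset.mem_univ _, ?_⟩⟩
    · linarith [mul_le_mul_of_nonneg_left (hle q k) (hw q).le]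
    · linarith [mul_le_mul_of_nonneg_left (hle q₁ k) (hw q₁).le]
    · linarith [mul_lt_mul_of_pos_left h₁ (hw q₁)]
  by_cases hQ : ∃ q₁, q₁ ≠ q₀
  · obtain ⟨q₁, hq₁⟩ := hQ
    have hm : ∀ q k, 0 < Real.sqrt (p q k * p' q k) := fun q k =>
      Real.sqrt_pos.2 (mul_pos (hp0 q k) (hp0' q k))
    have hlog : ∀ q k, 2 * Real.log (Real.sqrt (p q k * p' q k)) =
        Real.log (p q k) + Real.log (p' q k) := fun q k => by
      rw [Real.log_sqrt (mul_pos (hp0 q k) (hp0' q k)).le,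
        Real.log_mul (hp0 q k).ne' (hp0' q k).ne']; ring
    have hI : ∀ q k, (∃ r ∈ Finset.univ.erase q, p r k ≠ p' r k) →
        2 * Real.log (1 + ∑ r ∈ Finset.univ.erase q, Gc r q k * Real.sqrt (p r k * p' r k)) <
        Real.log (1 + ∑ r ∈ Finset.univ.erase q, Gc r q k * p r k) +
        Real.log (1 + ∑ r ∈ Finset.univ.erase q, Gc r q k * p' r k) := by
      intro q k hr
      have h1 := one_add_interference_pos hGc (fun q k => (hp0 q k).le) q k
      have h2 := one_add_interference_pos hGc (fun q k => (hp0' q k).le) q k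
      have h3 := one_add_interference_pos hGc (fun q k => (hm q k).le) q k
      rw [← Real.log_mul h1.ne' h2.ne']
      have := Real.log_lt_log (pow_pos h3 2) (one_add_sum_sqrt_sq_lt (Finset.univ.erase q)
        (fun r => Gc r q k) (fun r => p r k) (fun r => p' r k) (fun r => hGc r q k)
        (fun r => hp0 r k) (fun r => hp0' r k) hr)
      rwa [Real.log_pow, Nat.cast_ofNat] at this
    refine ⟨fun q k => Real.sqrt (p q k * p' q k), fun q => ?_, reduce _ hm (fun q k => ?_)
      ⟨q₁, k₀, ?_⟩⟩
    · refine mem_stratSet_of_le (hp q) (hp' q) (α := 1 / 2) (β := 1 / 2) (by norm_num)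
        (by norm_num) (by norm_num) (hm q) fun k => ?_
      refine Real.sqrt_le_iff.2 ⟨by linarith [hp0 q k, hp0' q k], ?_⟩
      nlinarith [sq_nonneg (p q k - p' q k)]
    · by_cases hr : ∃ r ∈ Finset.univ.erase q, p r k ≠ p' r k
      · linarith [hI q k hr, hlog q k]
      · push Not at hr
        have e : ∀ u : Fin Q → Fin N → ℝ, (∀ r ∈ Finset.univ.erase q, u r k = p r k) →
            ∑ r ∈ Finset.univ.erase q, Gc r q k * u r k =
            ∑ r ∈ Finset.univ.erase q, Gc r q k * p r k := fun u hu =>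
          Finset.sum_congr rfl fun r h => by rw [hu r h]
        rw [e p' fun r h => (hr r h).symm, e (fun q k => Real.sqrt (p q k * p' q k)) fun r h => by
          simp only [← hr r h, Real.sqrt_mul_self (hp0 r k).le]]
        linarith [hlog q k]
    · linarith [hI q₁ k₀ ⟨q₀, Finset.mem_erase.2 ⟨hq₁.symm, Finset.mem_univ _⟩, hqk⟩, hlog q₁ k₀]
  · push Not at hQ
    have he : ∀ q : Fin Q, Finset.univ.erase q = ∅ := fun q => by
      ext r; simp [hQ r, hQ q]
    have hm : ∀ q k, 0 < (p q k + p' q k) / 2 := fun q k => by linarith [hp0 q k, hp0' q k]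
    have hsq : ∀ q k, 2 * Real.log ((p q k + p' q k) / 2) =
        Real.log (((p q k + p' q k) / 2) ^ 2) := fun q k => by rw [Real.log_pow]; norm_cast
    refine ⟨fun q k => (p q k + p' q k) / 2, fun q => ?_, reduce _ hm (fun q k => ?_)
      ⟨q₀, k₀, ?_⟩⟩
    · exact mem_stratSet_of_le (hp q) (hp' q) (α := 1 / 2) (β := 1 / 2) (by norm_num)
        (by norm_num) (by norm_num) (hm q) fun k => by linarith
    · simp only [he, Finset.sum_empty, add_zero, Real.log_one, sub_zero]
      rw [hsq, ← Real.log_mul (hp0 q k).ne' (hp0' q k).ne']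
      refine Real.log_le_log (mul_pos (hp0 q k) (hp0' q k)) ?_
      nlinarith [sq_nonneg (p q k - p' q k)]
    · simp only [he, Finset.sum_empty, add_zero, Real.log_one, sub_zero]
      rw [hsq, ← Real.log_mul (hp0 q₀ k₀).ne' (hp0' q₀ k₀).ne']
      refine Real.log_lt_log (mul_pos (hp0 q₀ k₀) (hp0' q₀ k₀)) ?_
      nlinarith [sq_pos_of_ne_zero (sub_ne_zero.2 hqk)]

/-! ### Existence of a maximizer -/

/-- The exponential of `N` times the weighted sum rate, as a product of real powers. Unlike the
sum rate it extends continuously to profiles with zero powers, where it vanishes. -/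
noncomputable def prodObj (Gc : Fin Q → Fin Q → Fin N → ℝ) (lam : Fin Q → ℝ)
    (p : Fin Q → Fin N → ℝ) : ℝ :=
  ∏ q, ∏ k, (Gc q q k * p q k /
    (1 + ∑ r ∈ Finset.univ.erase q, Gc r q k * p r k)) ^ lam q

theorem prodObj_eq_exp {Gc : Fin Q → Fin Q → Fin N → ℝ} (hGc : ∀ r q k, 0 < Gc r q k)
    (hN : 1 ≤ N) (lam : Fin Q → ℝ) {p : Fin Q → Fin N → ℝ} (hp : ∀ q k, 0 < p q k) :
    prodObj Gc lam p = Real.exp (N * ∑ q, lam q * rate Gc q p) := by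
  have hN' : (N : ℝ) ≠ 0 := by positivity
  rw [Finset.mul_sum, Real.exp_sum]
  refine Finset.prod_congr rfl fun q _ => ?_
  have e : (N : ℝ) * (lam q * rate Gc q p) = ∑ k, lam q * Real.log (Gc q q k * p q k /
      (1 + ∑ r ∈ Finset.univ.erase q, Gc r q k * p r k)) := by
    rw [rate, ← Finset.mul_sum]; field_simp
  rw [e, Real.exp_sum]
  refine Finset.prod_congr rfl fun k _ => ?_
  rw [Real.rpow_def_of_pos (div_pos (mul_pos (hGc q q k) (hp q k))
    (one_add_interference_pos hGc (fun q k => (hp q k).le) q k)), mul_comm]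

theorem exists_stratSet (pm : Fin N → ℝ≥0∞) (hpm : ∀ k, 0 < pm k) : ∃ p, p ∈ stratSet N pm := by
  have hfin : ∀ k, min 1 (pm k) ≠ ∞ := fun k =>
    ne_top_of_le_ne_top ENNReal.one_ne_top (min_le_left _ _)
  refine ⟨fun k => (min 1 (pm k)).toReal, fun k => ⟨?_, ?_⟩, ?_⟩
  · exact ENNReal.toReal_pos (lt_min one_pos (hpm k)).ne' (hfin k)
  · rw [ENNReal.ofReal_toReal (hfin k)]; exact min_le_right _ _
  · have h : ∑ k, (min 1 (pm k)).toReal ≤ ∑ k : Fin N, (1 : ℝ) :=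
      Finset.sum_le_sum fun k _ => ENNReal.toReal_le_of_le_ofReal zero_le_one (by simp)
    simp only [Finset.sum_const, Finset.card_univ, Fintype.card_fin, nsmul_eq_mul, mul_one] at h
    rw [one_div_mul_eq_div]
    exact div_le_one_of_le₀ h (by positivity)

/-- The weighted sum rate attains its maximum: `prodObj` does so on the compact set of profiles
with nonnegative powers, and the maximizer has no zero power because `prodObj` is positive there. -/
theorem exists_max {Gc : Fin Q → Fin Q → Fin N → ℝ} (hGc : ∀ r q k, 0 < Gc r q k)
    (hN : 1 ≤ N) {pmax : Fin Q → Fin N → ℝ≥0∞} (hpmax : ∀ q k, 0 < pmax q k)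
    {lam : Fin Q → ℝ} (hlam : ∀ q, 0 < lam q) :
    ∃ p : Fin Q → Fin N → ℝ, (∀ q, p q ∈ stratSet N (pmax q)) ∧
      ∀ p' : Fin Q → Fin N → ℝ, (∀ q, p' q ∈ stratSet N (pmax q)) →
        ∑ q, lam q * rate Gc q p' ≤ ∑ q, lam q * rate Gc q p := by
  have hN0 : (0 : ℝ) < N := by positivity
  let K : Set (Fin Q → Fin N → ℝ) := {p | ∀ q, (∀ k, 0 ≤ p q k ∧
    ENNReal.ofReal (p q k) ≤ pmax q k) ∧ (1 / (N : ℝ)) * ∑ k, p q k ≤ 1}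
  have hKc : IsClosed K := by
    simp only [K, Set.ofPred_forall, Set.ofPred_and]
    refine isClosed_iInter fun q =>
      IsClosed.inter (isClosed_iInter fun k => IsClosed.inter ?_ ?_) ?_
    · exact isClosed_le (by fun_prop) (by fun_prop)
    · exact isClosed_le (ENNReal.continuous_ofReal.comp (by fun_prop)) (by fun_prop)
    · exact isClosed_le (by fun_prop) (by fun_prop)
  have hK : IsCompact K := by
    refine (isCompact_Icc (a := fun (_ : Fin Q) (_ : Fin N) => (0 : ℝ))
      (b := fun _ _ => (N : ℝ))).of_isClosed_subset hKc fun p hp => ⟨fun q k => ((hp q).1 k).1,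
        fun q k => ?_⟩
    have h1 := (hp q).2
    rw [one_div_mul_eq_div, div_le_one hN0] at h1
    exact (Finset.single_le_sum (fun k _ => ((hp q).1 k).1) (Finset.mem_univ k)).trans h1
  have hsub : ∀ p : Fin Q → Fin N → ℝ, (∀ q, p q ∈ stratSet N (pmax q)) → p ∈ K :=
    fun p hp q => ⟨fun k => ⟨((hp q).1 k).1.le, ((hp q).1 k).2⟩, (hp q).2⟩
  choose p₀ hp₀ using fun q => exists_stratSet (pmax q) (hpmax q)
  have hcont : ContinuousOn (prodObj Gc lam) K := by
    unfold prodObj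
    refine continuousOn_finsetProd _ fun q _ => continuousOn_finsetProd _ fun k _ => ?_
    refine ContinuousOn.rpow_const (ContinuousOn.div (by fun_prop) (by fun_prop) fun p hp => ?_)
      fun p _ => Or.inr (hlam q).le
    exact (one_add_interference_pos hGc (fun q k => ((hp q).1 k).1) q k).ne'
  obtain ⟨p, hpK, hpmaxK⟩ := hK.exists_isMaxOn ⟨p₀, hsub p₀ hp₀⟩ hcont
  have hpos : 0 < prodObj Gc lam p := by
    refine lt_of_lt_of_le ?_ (hpmaxK (hsub p₀ hp₀))
    simp only [prodObj_eq_exp hGc hN lam fun q k => ((hp₀ q).1 k).1]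
    exact Real.exp_pos _
  have hp0 : ∀ q k, 0 < p q k := by
    intro q k
    refine lt_of_le_of_ne ((hpK q).1 k).1 fun h => hpos.ne' ?_
    refine Finset.prod_eq_zero (Finset.mem_univ q) (Finset.prod_eq_zero (Finset.mem_univ k) ?_)
    rw [← h, mul_zero, zero_div, Real.zero_rpow (hlam q).ne']
  refine ⟨p, fun q => ⟨fun k => ⟨hp0 q k, ((hpK q).1 k).2⟩, (hpK q).2⟩, fun p' hp' => ?_⟩
  have h : prodObj Gc lam p' ≤ prodObj Gc lam p := hpmaxK (hsub p' hp')
  rw [prodObj_eq_exp hGc hN lam hp0, prodObj_eq_exp hGc hN lam fun q k => ((hp' q).1 k).1,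
    Real.exp_le_exp] at h
  exact le_of_mul_le_mul_left h hN0

end HighSinr

/-- **Proposition 4 (second part).** Under the low-interference/high-SNR rate model, for
every vector of positive weights `λ`, the modified game `G̃(λ)` admits exactly one Nash
equilibrium, and this equilibrium is the unique global maximizer of `Σ_q λ_q R_q` over
`P_1°×…×P_Q°`. -/
theorem HighSinr.mod_game_unique_NE (Q N : ℕ) (hQ : 1 ≤ Q) (hN : 1 ≤ N)
    (Gc : Fin Q → Fin Q → Fin N → ℝ) (hGc : ∀ r q k, 0 < Gc r q k)
    (pmax : Fin Q → Fin N → ℝ≥0∞) (hpmax : ∀ q k, 0 < pmax q k)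
    (lam : Fin Q → ℝ) (hlam : ∀ q, 0 < lam q) :
    ∃ p : Fin Q → Fin N → ℝ,
      HighSinr.isModNE Gc pmax lam p ∧
      (∀ p' : Fin Q → Fin N → ℝ, HighSinr.isModNE Gc pmax lam p' → p' = p) ∧
      (∀ p' : Fin Q → Fin N → ℝ, (∀ q, p' q ∈ HighSinr.stratSet N (pmax q)) →
        ∑ q, lam q * HighSinr.rate Gc q p' ≤ ∑ q, lam q * HighSinr.rate Gc q p) ∧
      (∀ p' : Fin Q → Fin N → ℝ, (∀ q, p' q ∈ HighSinr.stratSet N (pmax q)) →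
        (∀ p'' : Fin Q → Fin N → ℝ, (∀ q, p'' q ∈ HighSinr.stratSet N (pmax q)) →
          ∑ q, lam q * HighSinr.rate Gc q p'' ≤ ∑ q, lam q * HighSinr.rate Gc q p') →
        p' = p) := by
  have huniq : ∀ p p' : Fin Q → Fin N → ℝ, (∀ q, p q ∈ HighSinr.stratSet N (pmax q)) →
      (∀ q, p' q ∈ HighSinr.stratSet N (pmax q)) →
      (∀ m : Fin Q → Fin N → ℝ, (∀ q, m q ∈ HighSinr.stratSet N (pmax q)) →
        ∑ q, lam q * HighSinr.rate Gc q m ≤ ∑ q, lam q * HighSinr.rate Gc q p) →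
      (∀ m : Fin Q → Fin N → ℝ, (∀ q, m q ∈ HighSinr.stratSet N (pmax q)) →
        ∑ q, lam q * HighSinr.rate Gc q m ≤ ∑ q, lam q * HighSinr.rate Gc q p') → p' = p := by
    intro p p' hp hp' hmax hmax'
    by_contra hne
    obtain ⟨m, hm, hlt⟩ := HighSinr.exists_better_mean hGc hlam hp' hp hne
    linarith [hmax m hm, hmax' m hm]
  obtain ⟨p, hp, hmax⟩ := HighSinr.exists_max hGc hN hpmax hlam
  refine ⟨p, ⟨hp, fun q pq hpq => ?_⟩, fun p' hp' => ?_, hmax, fun p' hp' hmax' => ?_⟩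
  · refine le_of_mul_le_mul_left ?_ (hlam q)
    rw [HighSinr.lam_mul_modPayoff Gc hlam, HighSinr.lam_mul_modPayoff Gc hlam]
    refine hmax _ fun r => ?_
    by_cases hr : r = q
    · subst hr; simpa using hpq
    · simpa [hr] using hp r
  · exact huniq p p' hp hp'.1 hmax fun m hm => HighSinr.isModNE_max hGc hlam hp' hm
  · exact huniq p p' hp hp' hmax hmax'
end

section
/- Assume (1/N)·Σ_{k=1}^N p_q^max(k) > 1 for every q. If p* is a Nash equilibrium of game G, then for every user q there exists a water level μ_q ∈ ℝ such that for every carrier k, p*_q(k) = [ μ_q − Γ_q·(1 + Σ_{r≠q} |H_rq(k)|²·p*_r(k)) / |H_qq(k)|² ]_0^{p_q^max(k)}, and the power constraint is active: (1/N)·Σ_{k=1}^N p*_q(k) = 1. (The simultaneous-waterfilling characterization of Nash equilibria of game G.) -/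
/-!
For a fixed user, put `c k = Γ_q · (interference-plus-noise on k) / |H_qq(k)|²`. Up to the factor `1/N`
the payoff of a strategy `y` is `∑ k, log (1 + y k / c k)`, so an equilibrium strategy `x` maximizes this
sum over the strategy set. Two elementary exchange arguments replace the KKT conditions.

* Raising the power of a single unsaturated carrier strictly increases the sum, so if the budget
  were slack then all carriers would be saturated, contrary to the assumption on the masks
  (`sum_eq_of_best`).
* Moving a little power from a carrier `i` with `x i > 0` to an unsaturated carrier `j` strictly
  increases the sum if `x j + c j < x i + c i`; hence `x i + c i ≤ x j + c j` (`level_le_of_best`).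

The water level is the maximum of `x i + c i` over the carriers in use, and the projection
formula follows by distinguishing inactive, saturated and intermediate carriers
(`eq_proj_of_levels`).
-/

open scoped ENNReal

namespace NCGame

/-- The data of game `G`: `Q` users, `N` carriers, channel gains `chan r q k` (from source `r`
to destination `q` on carrier `k`), gap parameters `gap q ≥ 1`, and spectral-mask limits
`pmax q k ∈ (0, ∞]`. -/
structure GameData (Q N : ℕ) where
  chan : Fin Q → Fin Q → Fin N → ℂ
  gap : Fin Q → ℝ
  pmax : Fin Q → Fin N → ℝ≥0∞
  chan_diag_ne : ∀ q k, chan q q k ≠ 0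
  one_le_gap : ∀ q, 1 ≤ gap q
  pmax_pos : ∀ q k, 0 < pmax q k

namespace GameData

variable {Q N : ℕ}

/-- The strategy set `P_q` of user `q`: powers within the spectral mask whose average
does not exceed the power budget. -/
def stratSet (G : GameData Q N) (q : Fin Q) : Set (Fin N → ℝ) :=
  { p | (∀ k, 0 ≤ p k ∧ ENNReal.ofReal (p k) ≤ G.pmax q k) ∧
        (1 / (N : ℝ)) * ∑ k, p k ≤ 1 }

/-- Interference-plus-noise `1 + Σ_{r ≠ q} |H_rq(k)|² p_r(k)` seen by user `q` on carrier `k`. -/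
noncomputable def interf (G : GameData Q N) (q : Fin Q) (p : Fin Q → Fin N → ℝ)
    (k : Fin N) : ℝ :=
  1 + ∑ r ∈ Finset.univ.erase q, ‖G.chan r q k‖ ^ 2 * p r k

/-- The payoff `R_q(p)` of user `q` at the strategy profile `p`. -/
noncomputable def payoff (G : GameData Q N) (q : Fin Q) (p : Fin Q → Fin N → ℝ) : ℝ :=
  (1 / (N : ℝ)) * ∑ k, Real.log (1 +
    (1 / G.gap q) * (‖G.chan q q k‖ ^ 2 * p q k) / G.interf q p k)

/-- `p` is a Nash equilibrium of game `G`. -/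
def isNE (G : GameData Q N) (p : Fin Q → Fin N → ℝ) : Prop :=
  (∀ q, p q ∈ G.stratSet q) ∧
  ∀ q, ∀ pq ∈ G.stratSet q, G.payoff q (Function.update p q pq) ≤ G.payoff q p

end GameData

end NCGame

namespace NCGame

/-- Euclidean projection of `x` onto the interval `[0, b]`, where `b ∈ (0, ∞]`. -/
noncomputable def proj (x : ℝ) (b : ℝ≥0∞) : ℝ :=
  if b = ⊤ then max 0 x else min b.toReal (max 0 x)

namespace GameData

variable {Q N : ℕ}

/-- `p` is an admissible strategy profile of the users other than `q` (the `q`-th component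
is irrelevant). -/
def otherStrats (G : GameData Q N) (q : Fin Q) (p : Fin Q → Fin N → ℝ) : Prop :=
  ∀ r, r ≠ q → p r ∈ G.stratSet r

/-- `wf` is the waterfilling response `WF_q(p_{-q})` of user `q` to the strategies `p` of the
other users: there is a water level `μ` such that each component is the projection of
`μ − Γ_q (1 + Σ_{r≠q}|H_rq(k)|² p_r(k))/|H_qq(k)|²` onto `[0, p_q^max(k)]`, and the average
power equals `1`. -/
def isWFResp (G : GameData Q N) (q : Fin Q) (p : Fin Q → Fin N → ℝ)
    (wf : Fin N → ℝ) : Prop :=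
  (∃ μ : ℝ, ∀ k, wf k =
      proj (μ - G.gap q * G.interf q p k / ‖G.chan q q k‖ ^ 2) (G.pmax q k)) ∧
  (1 / (N : ℝ)) * ∑ k, wf k = 1

/-- The set `D_q` of carriers that user `q` can possibly use in a waterfilling best response
to some admissible strategy of the other users. -/
def Dset (G : GameData Q N) (q : Fin Q) : Set (Fin N) :=
  { k | ∃ p wf, G.otherStrats q p ∧ G.isWFResp q p wf ∧ wf k ≠ 0 }

open Classical in
/-- The matrix `H(k)` of normalized cross-channel gains. -/
noncomputable def Hmat (G : GameData Q N) (k : Fin N) : Matrix (Fin Q) (Fin Q) ℝ :=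
  fun q r =>
    if r ≠ q ∧ k ∈ G.Dset q ∧ k ∈ G.Dset r then
      G.gap q * ‖G.chan r q k‖ ^ 2 / ‖G.chan q q k‖ ^ 2
    else 0

end GameData

/-- Spectral radius of a real square matrix: the largest modulus of its (complex) spectrum. -/
noncomputable def specRad {Q : ℕ} (M : Matrix (Fin Q) (Fin Q) ℝ) : ℝ :=
  sSup ((fun z => ‖z‖) '' spectrum ℂ (M.map (Complex.ofReal ·)))

end NCGame

namespace NCGame

/-- `y` is a power allocation within the masks `b` and of total power at most `N`. -/
def Feasible {N : ℕ} (b : Fin N → ℝ≥0∞) (y : Fin N → ℝ) : Prop :=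
  (∀ k, 0 ≤ y k ∧ ENNReal.ofReal (y k) ≤ b k) ∧ ∑ k, y k ≤ N

/-- `x` maximizes the single-user rate `∑ k, log (1 + y k / c k)` among feasible allocations. -/
def IsBest {N : ℕ} (b : Fin N → ℝ≥0∞) (c x : Fin N → ℝ) : Prop :=
  Feasible b x ∧ ∀ y, Feasible b y →
    ∑ k, Real.log (1 + y k / c k) ≤ ∑ k, Real.log (1 + x k / c k)

lemma exists_room {a δ : ℝ} {m : ℝ≥0∞} (ha : 0 ≤ a) (hδ : 0 < δ) (h : ENNReal.ofReal a < m) :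
    ∃ ε, 0 < ε ∧ ε ≤ δ ∧ ENNReal.ofReal (a + ε) ≤ m := by
  by_cases hm : m = ⊤
  · exact ⟨δ, hδ, le_rfl, by simp [hm]⟩
  · have ham : a < m.toReal := (ENNReal.ofReal_lt_iff_lt_toReal ha hm).1 h
    refine ⟨min δ (m.toReal - a), lt_min hδ (by linarith), min_le_left _ _, ?_⟩
    apply ENNReal.ofReal_le_of_le_toReal
    linarith [min_le_right δ (m.toReal - a)]

lemma sum_eq_of_best {N : ℕ} {b : Fin N → ℝ≥0∞} {c x : Fin N → ℝ} (hc : ∀ k, 0 < c k)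
    (hb : (N : ℝ≥0∞) < ∑ k, b k) (hx : IsBest b c x) : ∑ k, x k = N := by
  obtain ⟨⟨hmask, hsum⟩, hbest⟩ := hx
  by_contra hne
  have hlt : ∑ k, x k < N := lt_of_le_of_ne hsum hne
  have hsat : ∀ k, b k ≤ ENNReal.ofReal (x k) := by
    intro k
    by_contra! hk
    obtain ⟨ε, hε, hεδ, hεb⟩ := exists_room (hmask k).1 (sub_pos.2 hlt) hk
    have hother : ∀ l, l ≠ k → Function.update x k (x k + ε) l = x l := fun l hl => by
      simp [hl]
    have hfeas : Feasible b (Function.update x k (x k + ε)) := by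
      constructor
      · intro l
        by_cases hl : l = k
        · subst hl
          simp only [Function.update_self]
          exact ⟨by linarith [(hmask l).1], hεb⟩
        · rw [hother l hl]
          exact hmask l
      · have : ∑ l, (Function.update x k (x k + ε) l - x l) = ε := by
          rw [Fintype.sum_eq_single k (fun l hl => by rw [hother l hl, sub_self])]
          simp
        rw [Finset.sum_sub_distrib] at this
        linarith
    have hle := hbest _ hfeas
    have hdiff : ∑ l, (Real.log (1 + Function.update x k (x k + ε) l / c l)
        - Real.log (1 + x l / c l))
        = Real.log (1 + (x k + ε) / c k) - Real.log (1 + x k / c k) := by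
      rw [Fintype.sum_eq_single k (fun l hl => by rw [hother l hl, sub_self])]
      simp
    rw [Finset.sum_sub_distrib] at hdiff
    have hpos : 0 < 1 + x k / c k := by
      have := div_nonneg (hmask k).1 (hc k).le
      linarith
    have hlog : Real.log (1 + x k / c k) < Real.log (1 + (x k + ε) / c k) := by
      apply Real.log_lt_log hpos
      have := hc k
      gcongr
      linarith
    linarith
  have h1 : ∑ k, b k ≤ ENNReal.ofReal (∑ k, x k) := by
    rw [ENNReal.ofReal_sum_of_nonneg (fun k _ => (hmask k).1)]
    exact Finset.sum_le_sum (fun k _ => hsat k)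
  have h2 : ENNReal.ofReal (∑ k, x k) ≤ N := by
    rw [← ENNReal.ofReal_natCast]
    exact ENNReal.ofReal_le_ofReal hsum
  exact absurd (hb.trans_le (h1.trans h2)) (lt_irrefl _)

lemma level_le_of_best {N : ℕ} {b : Fin N → ℝ≥0∞} {c x : Fin N → ℝ} (hc : ∀ k, 0 < c k)
    (hx : IsBest b c x) {i j : Fin N} (hi : 0 < x i) (hj : ENNReal.ofReal (x j) < b j) :
    x i + c i ≤ x j + c j := by
  obtain ⟨⟨hmask, hsum⟩, hbest⟩ := hx
  by_contra! hlt
  have hij : i ≠ j := by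
    rintro rfl
    exact lt_irrefl _ hlt
  have hδ : 0 < min (x i) ((x i + c i - (x j + c j)) / 2) := lt_min hi (by linarith)
  obtain ⟨ε, hε, hεδ, hεb⟩ := exists_room (hmask j).1 hδ hj
  have hεi : ε ≤ x i := hεδ.trans (min_le_left _ _)
  have hεl : ε ≤ (x i + c i - (x j + c j)) / 2 := hεδ.trans (min_le_right _ _)
  obtain ⟨y, hyi, hyj, hother⟩ : ∃ y : Fin N → ℝ, y i = x i - ε ∧ y j = x j + ε ∧
      ∀ l, l ≠ i ∧ l ≠ j → y l = x l :=
    ⟨Function.update (Function.update x i (x i - ε)) j (x j + ε), by simp [hij], by simp,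
      fun l hl => by simp [hl.1, hl.2]⟩
  have hfeas : Feasible b y := by
    constructor
    · intro l
      by_cases hli : l = i
      · subst hli
        rw [hyi]
        exact ⟨by linarith, (ENNReal.ofReal_le_ofReal (by linarith)).trans (hmask l).2⟩
      · by_cases hlj : l = j
        · subst hlj
          rw [hyj]
          exact ⟨by linarith [(hmask l).1], hεb⟩
        · rw [hother l ⟨hli, hlj⟩]
          exact hmask l
    · have : ∑ l, (y l - x l) = 0 := by
        rw [Fintype.sum_eq_add i j hij (fun l hl => by rw [hother l hl, sub_self]), hyi, hyj]
        ring
      rw [Finset.sum_sub_distrib] at this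
      linarith
  have hle := hbest _ hfeas
  have hdiff : ∑ l, (Real.log (1 + y l / c l) - Real.log (1 + x l / c l))
      = (Real.log (1 + (x i - ε) / c i) - Real.log (1 + x i / c i))
        + (Real.log (1 + (x j + ε) / c j) - Real.log (1 + x j / c j)) := by
    rw [Fintype.sum_eq_add i j hij (fun l hl => by rw [hother l hl, sub_self]), hyi, hyj]
  rw [Finset.sum_sub_distrib] at hdiff
  have hci := hc i
  have hcj := hc j
  have hxj := (hmask j).1
  have hpos : ∀ {u v : ℝ}, 0 ≤ u → 0 < v → 0 < 1 + u / v := fun hu hv => by positivity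
  have hlog : Real.log (1 + x i / c i) + Real.log (1 + x j / c j)
      < Real.log (1 + (x i - ε) / c i) + Real.log (1 + (x j + ε) / c j) := by
    rw [← Real.log_mul (hpos hi.le hci).ne' (hpos hxj hcj).ne',
      ← Real.log_mul (hpos (sub_nonneg.2 hεi) hci).ne' (hpos (by linarith) hcj).ne']
    apply Real.log_lt_log (mul_pos (hpos hi.le hci) (hpos hxj hcj))
    -- After clearing `c i * c j`, the gain is `ε * ((x i + c i) - (x j + c j) - ε)`.
    have key : (1 + (x i - ε) / c i) * (1 + (x j + ε) / c j)
        - (1 + x i / c i) * (1 + x j / c j)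
        = ε * (x i + c i - (x j + c j) - ε) / (c i * c j) := by
      field_simp
      ring
    have : 0 < ε * (x i + c i - (x j + c j) - ε) / (c i * c j) :=
      div_pos (mul_pos hε (by linarith)) (mul_pos hci hcj)
    linarith
  linarith

lemma eq_proj_of_levels {a c μ : ℝ} {m : ℝ≥0∞} (hm : 0 < m) (ha : 0 ≤ a)
    (ham : ENNReal.ofReal a ≤ m) (hused : 0 < a → a + c ≤ μ)
    (hunsat : ENNReal.ofReal a < m → μ ≤ a + c) : a = proj (μ - c) m := by
  unfold proj
  rcases ham.lt_or_eq with hlt | heq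
  · have h1 := hunsat hlt
    have hmax : max 0 (μ - c) = a := by
      rcases ha.eq_or_lt with h0 | hpos
      · rw [max_eq_left (by linarith), h0]
      · rw [max_eq_right (by linarith [hused hpos])]
        linarith [hused hpos]
    rw [hmax]
    split_ifs with htop
    · rfl
    · exact (min_eq_right ((ENNReal.ofReal_lt_iff_lt_toReal ha htop).1 hlt).le).symm
  · have hpos : 0 < a := ENNReal.ofReal_pos.1 (heq ▸ hm)
    have h1 := hused hpos
    subst heq
    rw [if_neg ENNReal.ofReal_ne_top, ENNReal.toReal_ofReal ha, max_eq_right (by linarith),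
      min_eq_left (by linarith)]

lemma exists_level_of_best {N : ℕ} (hN : 1 ≤ N) {b : Fin N → ℝ≥0∞} {c x : Fin N → ℝ}
    (hc : ∀ k, 0 < c k) (hb0 : ∀ k, 0 < b k) (hb : (N : ℝ≥0∞) < ∑ k, b k)
    (hx : IsBest b c x) : ∃ μ : ℝ, ∀ k, x k = proj (μ - c k) (b k) := by
  have hsum := sum_eq_of_best hc hb hx
  have hne : (Finset.univ.filter (fun k => 0 < x k)).Nonempty := by
    by_contra! hempty
    have hle : ∑ k, x k ≤ 0 := Finset.sum_nonpos fun k _ => by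
      by_contra! hk
      have : k ∈ Finset.univ.filter (fun k => 0 < x k) := by simp [hk]
      simp [hempty] at this
    have : (1 : ℝ) ≤ N := by exact_mod_cast hN
    linarith
  obtain ⟨i, hi, hmax⟩ := Finset.exists_max_image _ (fun k => x k + c k) hne
  simp only [Finset.mem_filter, Finset.mem_univ, true_and] at hi hmax
  exact ⟨x i + c i, fun k => eq_proj_of_levels (hb0 k) (hx.1.1 k).1 (hx.1.1 k).2 (hmax k)
    (level_le_of_best hc hx hi)⟩

lemma mem_stratSet_iff {Q N : ℕ} (hN : 1 ≤ N) (G : GameData Q N) (q : Fin Q)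
    (y : Fin N → ℝ) : y ∈ G.stratSet q ↔ Feasible (G.pmax q) y := by
  have hN' : (0 : ℝ) < N := by exact_mod_cast hN
  have : (1 / (N : ℝ)) * ∑ k, y k ≤ 1 ↔ ∑ k, y k ≤ N := by
    rw [one_div_mul_eq_div, div_le_one hN']
  simp only [GameData.stratSet, Set.mem_ofPred_eq, Feasible, this]

lemma interf_update {Q N : ℕ} (G : GameData Q N) (q : Fin Q) (p : Fin Q → Fin N → ℝ)
    (y : Fin N → ℝ) : G.interf q (Function.update p q y) = G.interf q p := by
  funext k
  unfold GameData.interf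
  congr 1
  refine Finset.sum_congr rfl fun r hr => ?_
  rw [Function.update_of_ne (Finset.ne_of_mem_erase hr)]

lemma interf_pos {Q N : ℕ} (G : GameData Q N) (q : Fin Q) (p : Fin Q → Fin N → ℝ)
    (hp : ∀ r k, 0 ≤ p r k) (k : Fin N) : 0 < G.interf q p k := by
  unfold GameData.interf
  have : 0 ≤ ∑ r ∈ Finset.univ.erase q, ‖G.chan r q k‖ ^ 2 * p r k :=
    Finset.sum_nonneg fun r _ => mul_nonneg (by positivity) (hp r k)
  linarith

lemma payoff_update {Q N : ℕ} (G : GameData Q N) (q : Fin Q) (p : Fin Q → Fin N → ℝ)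
    (y : Fin N → ℝ) : G.payoff q (Function.update p q y) =
      (1 / (N : ℝ)) *
        ∑ k, Real.log (1 + y k / (G.gap q * G.interf q p k / ‖G.chan q q k‖ ^ 2)) := by
  unfold GameData.payoff
  rw [interf_update, Function.update_self]
  congr 1
  refine Finset.sum_congr rfl fun k _ => ?_
  congr 2
  rw [div_div_eq_mul_div, one_div_mul_eq_div, div_div, mul_comm (y k)]

end NCGame

/-- **Simultaneous-waterfilling characterization of Nash equilibria of game `G`.**
Assume `(1/N)·Σ_k p_q^max(k) > 1` for every `q`. If `p*` is a Nash equilibrium of `G`, then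
for every user `q` there is a water level `μ_q` such that every component of `p*_q` is the
projection of `μ_q − Γ_q (1 + Σ_{r≠q}|H_rq(k)|² p*_r(k))/|H_qq(k)|²` onto `[0, p_q^max(k)]`,
and the power constraint is active. -/
theorem NCGame.NE_is_waterfilling (Q N : ℕ) (hQ : 1 ≤ Q) (hN : 1 ≤ N)
    (G : NCGame.GameData Q N)
    (hbudget : ∀ q, (1 : ℝ≥0∞) < (1 / (N : ℝ≥0∞)) * ∑ k, G.pmax q k)
    (p : Fin Q → Fin N → ℝ) (hNE : G.isNE p) :
    ∀ q : Fin Q, ∃ μ : ℝ,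
      (∀ k : Fin N, p q k =
        NCGame.proj (μ - G.gap q * G.interf q p k / ‖G.chan q q k‖ ^ 2) (G.pmax q k)) ∧
      (1 / (N : ℝ)) * ∑ k, p q k = 1 := by
  intro q
  obtain ⟨hmem, hopt⟩ := hNE
  have hNpos : (0 : ℝ) < N := by exact_mod_cast hN
  have hc : ∀ k, 0 < G.gap q * G.interf q p k / ‖G.chan q q k‖ ^ 2 := fun k => by
    have h1 : 0 < G.gap q := lt_of_lt_of_le one_pos (G.one_le_gap q)
    have h2 := NCGame.interf_pos G q p (fun r k => ((hmem r).1 k).1) k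
    have h3 : 0 < ‖G.chan q q k‖ := norm_pos_iff.2 (G.chan_diag_ne q k)
    positivity
  have hb : (N : ℝ≥0∞) < ∑ k, G.pmax q k := by
    have hN0 : (N : ℝ≥0∞) ≠ 0 := by
      simp only [ne_eq, Nat.cast_eq_zero]
      omega
    have h := hbudget q
    rw [one_div, mul_comm, ← div_eq_mul_inv,
      ENNReal.lt_div_iff_mul_lt (Or.inl hN0) (Or.inl (ENNReal.natCast_ne_top N)), one_mul] at h
    exact h
  have hbest : NCGame.IsBest (G.pmax q)
      (fun k => G.gap q * G.interf q p k / ‖G.chan q q k‖ ^ 2) (p q) := by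
    refine ⟨(NCGame.mem_stratSet_iff hN G q _).1 (hmem q), fun y hy => ?_⟩
    have h := hopt q y ((NCGame.mem_stratSet_iff hN G q _).2 hy)
    have hself := NCGame.payoff_update G q p (p q)
    rw [Function.update_eq_self] at hself
    rw [NCGame.payoff_update, hself] at h
    exact le_of_mul_le_mul_left h (one_div_pos.2 hNpos)
  obtain ⟨μ, hμ⟩ := NCGame.exists_level_of_best hN hc (G.pmax_pos q) hb hbest
  refine ⟨μ, hμ, ?_⟩
  rw [NCGame.sum_eq_of_best hc hb hbest, one_div_mul_cancel hNpos.ne']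
end
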